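/- arXiv:1803.07899 — 2 statements merged into one kernel-verified Lean document; each statement's English description precedes it below -/
import Mathlib

section
/- Let T be a plane tree with N + 1 vertices and Łukasiewicz path W. Then W(j) ≥ 0 for every 0 ≤ j ≤ N, and W(N+1) = −1. -/
/-!
Let `S` be the set of vertices visited before time `j` and `C` the set of non-root vertices whose
parent lies in `S`. Summing `k_v - 1` over `S` gives `W j = #C - #S` (`PlaneTree.luka_eq`). A parent
precedes its children, so `S \ {∅} ⊆ C`. If `1 ≤ j ≤ N`, some vertex lies outside `S`
(`PlaneTree.exists_le_idx`); a shortest such vertex has its parent in `S`, so it belongs to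
`C \ S`, whence `#C ≥ #S`. For `j = N + 1`, `S` is the whole tree and `C = S \ {∅}`, so
`W (N + 1) = -1`.
-/

/-- A plane tree: a finite nonempty set of finite sequences of positive integers containing
the empty sequence (the root), closed under taking prefixes, and such that for every vertex
`u` there is `k_u ≥ 0` with `u ++ [i]` a vertex if and only if `1 ≤ i ≤ k_u`. -/
structure PlaneTree where
  verts : Finset (List ℕ)
  root_mem : ([] : List ℕ) ∈ verts
  prefix_closed : ∀ u ∈ verts, ∀ v : List ℕ, v <+: u → v ∈ verts
  children_iff : ∀ u ∈ verts, ∃ k : ℕ, ∀ i : ℕ, u ++ [i] ∈ verts ↔ 1 ≤ i ∧ i ≤ k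

namespace PlaneTree

/-- The number `k_u` of children of a vertex `u`: the number of vertices whose parent
(the sequence with its last entry removed) is `u`. -/
def deg (T : PlaneTree) (u : List ℕ) : ℕ :=
  (T.verts.filter fun v => v ≠ [] ∧ v.dropLast = u).card

/-- The index of a vertex `v` in the lexicographical listing `u_0 < u_1 < ⋯ < u_N` of the
vertices: the number of vertices lexicographically smaller than `v`. -/
def idx (T : PlaneTree) (v : List ℕ) : ℕ :=
  (T.verts.filter fun w => List.Lex (· < ·) w v).card

/-- The Łukasiewicz path of a plane tree: `W 0 = 0` and `W (j+1) = W j + k_{u_j} − 1`,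
where `u_0 < ⋯ < u_N` is the lexicographical listing of the vertices; equivalently,
`W j = Σ_{v : idx v < j} (k_v − 1)`. -/
def luka (T : PlaneTree) (j : ℕ) : ℤ :=
  ∑ v ∈ T.verts.filter (fun v => T.idx v < j), ((T.deg v : ℤ) - 1)

/-- The value of the Łukasiewicz path at (the index of) a vertex. -/
def lukaV (T : PlaneTree) (v : List ℕ) : ℤ := T.luka (T.idx v)

/-- `χ_u`: the last entry of a (nonempty) vertex `u`, i.e. its position among its siblings. -/
def chi (u : List ℕ) : ℕ := u.getLastD 0

end PlaneTree

namespace PlaneTree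

theorem lex_dropLast {v : List ℕ} (hv : v ≠ []) : List.Lex (· < ·) v.dropLast v := by
  induction v with
  | nil => exact absurd rfl hv
  | cons a l ih =>
    cases l with
    | nil => exact List.Lex.nil
    | cons b l => exact List.Lex.cons (ih (by simp))

theorem dropLast_mem (T : PlaneTree) {v : List ℕ} (hv : v ∈ T.verts) : v.dropLast ∈ T.verts :=
  T.prefix_closed v hv _ (List.dropLast_prefix v)

theorem idx_nil (T : PlaneTree) : T.idx [] = 0 := by
  simp [idx]

theorem idx_lt_card (T : PlaneTree) {v : List ℕ} (hv : v ∈ T.verts) :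
    T.idx v < T.verts.card := by
  apply Finset.card_lt_card
  refine Finset.filter_ssubset.2 ⟨v, hv, ?_⟩
  exact lt_irrefl (α := List ℕ) v

theorem idx_dropLast_le (T : PlaneTree) (v : List ℕ) : T.idx v.dropLast ≤ T.idx v := by
  by_cases hv : v = []
  · simp [hv]
  apply Finset.card_le_card
  intro w hw
  rw [Finset.mem_filter] at hw ⊢
  exact ⟨hw.1, lt_trans (α := List ℕ) hw.2 (lex_dropLast hv)⟩

/-- The lexicographically largest vertex has index `N`, so it is not visited before time `N`. -/
theorem exists_le_idx (T : PlaneTree) {j : ℕ} (hj : j < T.verts.card) :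
    ∃ v ∈ T.verts, j ≤ T.idx v := by
  have hne : T.verts.Nonempty := ⟨_, T.root_mem⟩
  refine ⟨T.verts.max' hne, T.verts.max'_mem hne, ?_⟩
  have h : T.verts.erase (T.verts.max' hne) ⊆
      T.verts.filter fun w => List.Lex (· < ·) w (T.verts.max' hne) := by
    intro w hw
    rw [Finset.mem_erase] at hw
    exact Finset.mem_filter.2 ⟨hw.2, lt_of_le_of_ne (T.verts.le_max' w hw.2) hw.1⟩
  have h2 := Finset.card_le_card h
  rw [Finset.card_erase_of_mem (T.verts.max'_mem hne)] at h2
  unfold idx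
  omega

/-- The number of children of the vertices visited before time `j`, minus the number of these
vertices, is `W j`. -/
theorem luka_eq (T : PlaneTree) (j : ℕ) :
    T.luka j = ((T.verts.filter fun v => v ≠ [] ∧ T.idx v.dropLast < j).card : ℤ)
      - (T.verts.filter fun v => T.idx v < j).card := by
  unfold luka
  rw [Finset.sum_sub_distrib]
  congr 1
  · rw [Finset.card_eq_sum_card_fiberwise (f := List.dropLast)
      (t := T.verts.filter fun v => T.idx v < j)]
    · push_cast
      refine Finset.sum_congr rfl fun u hu => ?_
      rw [Finset.mem_filter] at hu
      unfold deg
      congr 2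
      ext v
      simp only [Finset.mem_filter]
      constructor
      · rintro ⟨h1, h2, rfl⟩
        exact ⟨⟨h1, h2, hu.2⟩, rfl⟩
      · rintro ⟨⟨h1, h2, -⟩, h3⟩
        exact ⟨h1, h2, h3⟩
    · intro v hv
      simp only [Finset.coe_filter, Set.mem_ofPred_eq] at hv ⊢
      exact ⟨T.dropLast_mem hv.1, hv.2.2⟩
  · simp

end PlaneTree

/-- Let `T` be a plane tree with `N + 1` vertices and Łukasiewicz path `W`. Then `W j ≥ 0`
for every `0 ≤ j ≤ N`, and `W (N+1) = −1`. -/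
theorem luka_nonneg_and_final (T : PlaneTree) :
    (∀ j : ℕ, j < T.verts.card → 0 ≤ T.luka j) ∧ T.luka T.verts.card = -1 := by
  constructor
  · intro j hj
    rw [T.luka_eq, sub_nonneg, Nat.cast_le]
    rcases Nat.eq_zero_or_pos j with rfl | hpos
    · simp
    obtain ⟨x, hx, hxj⟩ := T.exists_le_idx hj
    -- `v` is a shortest vertex not visited before time `j`
    obtain ⟨v, hv, hmin⟩ := (T.verts.filter fun v => j ≤ T.idx v).exists_min_image List.length
      ⟨x, Finset.mem_filter.2 ⟨hx, hxj⟩⟩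
    rw [Finset.mem_filter] at hv
    have hv0 : v ≠ [] := by
      rintro rfl
      have := T.idx_nil
      omega
    have hpar : T.idx v.dropLast < j := by
      by_contra! h
      have := hmin _ (Finset.mem_filter.2 ⟨T.dropLast_mem hv.1, h⟩)
      rw [List.length_dropLast] at this
      have := List.length_pos_iff.2 hv0
      omega
    -- exchanging the root for `v` maps `S` into `C`
    have hroot : ([] : List ℕ) ∈ T.verts.filter fun v => T.idx v < j :=
      Finset.mem_filter.2 ⟨T.root_mem, by rwa [T.idx_nil]⟩
    have hvS : v ∉ (T.verts.filter fun v => T.idx v < j).erase [] := by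
      simp only [Finset.mem_erase, Finset.mem_filter]
      rintro ⟨-, -, h⟩
      omega
    rw [← Finset.card_erase_add_one hroot, ← Finset.card_insert_of_notMem hvS]
    apply Finset.card_le_card
    intro w hw
    rw [Finset.mem_insert, Finset.mem_erase, Finset.mem_filter] at hw
    rw [Finset.mem_filter]
    rcases hw with rfl | ⟨h1, h2, h3⟩
    · exact ⟨hv.1, hv0, hpar⟩
    · exact ⟨h2, h1, (T.idx_dropLast_le w).trans_lt h3⟩
  · rw [T.luka_eq, Finset.filter_true_of_mem (fun v hv => T.idx_lt_card hv)]
    have h : (T.verts.filter fun v => v ≠ [] ∧ T.idx v.dropLast < T.verts.card) =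
        T.verts.erase [] := by
      ext v
      simp only [Finset.mem_filter, Finset.mem_erase]
      exact ⟨fun h => ⟨h.2.1, h.1⟩, fun h => ⟨h.2, h.1, T.idx_lt_card (T.dropLast_mem h.2)⟩⟩
    rw [h, ← Finset.card_erase_add_one T.root_mem]
    push_cast
    ring
end

section
/- Let T be a plane tree with N + 1 vertices and Łukasiewicz path W, and let 0 ≤ j < m ≤ N. Then u_j is a strict ancestor of u_m if and only if W(j) = min{W(r) : j ≤ r ≤ m}. Moreover, if u_j is a strict ancestor of u_m and w is the child of u_j that is an ancestor of u_m (possibly u_m itself), then W(w) = min{W(r) : j + 1 ≤ r ≤ m}. -/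
namespace PlaneTree

/-! ### Prefixes and the lexicographical order -/

lemma le_of_prefix {a b : List ℕ} (h : a <+: b) : a ≤ b := by
  obtain ⟨t, rfl⟩ := h
  induction a with
  | nil => exact not_lt.1 (List.not_lt_nil _)
  | cons c l ih =>
    rcases ih.lt_or_eq with h | h
    · exact (List.cons_lt_cons_iff.2 (Or.inr ⟨rfl, h⟩)).le
    · exact (congrArg (c :: ·) h).le

lemma lt_of_prefix_of_ne {a b : List ℕ} (h : a <+: b) (hne : a ≠ b) : a < b :=
  lt_of_le_of_ne (le_of_prefix h) hne

lemma dropLast_lt {z : List ℕ} (hz : z ≠ []) : z.dropLast < z :=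
  lt_of_prefix_of_ne (List.dropLast_prefix z) fun h => by
    have := congrArg List.length h
    have := List.length_pos_iff.2 hz
    simp at *
    omega

lemma prefix_dropLast {a b : List ℕ} (h : a <+: b) (hne : a ≠ b) : a <+: b.dropLast := by
  obtain ⟨t, rfl⟩ := h
  have ht : t ≠ [] := by rintro rfl; simp at hne
  rw [List.dropLast_append_of_ne_nil ht]
  exact List.prefix_append _ _

/-- The longest common prefix of `a < b`, when `a` is not a prefix of `b`, and the first
entries that differ. -/
lemma exists_split {a b : List ℕ} (h : a < b) (hp : ¬ a <+: b) :
    ∃ p i j s t, i < j ∧ a = p ++ i :: s ∧ b = p ++ j :: t := by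
  induction a generalizing b with
  | nil => exact absurd List.nil_prefix hp
  | cons c l ih =>
    cases b with
    | nil => exact absurd h (List.not_lt_nil _)
    | cons d m =>
      rcases List.cons_lt_cons_iff.1 h with hcd | ⟨rfl, hlm⟩
      · exact ⟨[], c, d, l, m, hcd, rfl, rfl⟩
      · obtain ⟨p, i, j, s, t, hij, rfl, rfl⟩ := ih hlm fun hq => hp (by simpa using hq)
        exact ⟨c :: p, i, j, s, t, hij, rfl, rfl⟩

lemma append_cons_lt {p s t : List ℕ} {i j : ℕ} (h : i < j) : p ++ i :: s < p ++ j :: t := by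
  induction p with
  | nil => exact List.cons_lt_cons_iff.2 (Or.inl h)
  | cons c l ih => exact List.cons_lt_cons_iff.2 (Or.inr ⟨rfl, ih⟩)

/-- If `z` comes after `w` and its parent comes before `w`, then `z` comes after all
descendants of `w`. -/
lemma lt_of_prefix_of_pending {w v z : List ℕ} (hwv : w <+: v) (hwz : w < z)
    (hz : z.dropLast < w) : v < z := by
  have hnp : ¬ w <+: z := fun h =>
    absurd (le_of_prefix (prefix_dropLast h hwz.ne)) (not_le.2 hz)
  obtain ⟨p, i, j, s, t, hij, rfl, rfl⟩ := exists_split hwz hnp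
  obtain ⟨r, rfl⟩ := hwv
  simpa using append_cons_lt (p := p) (s := s ++ r) (t := t) hij

/-- The parent of a vertex pending at `x` is an ancestor of `x`. -/
lemma dropLast_prefix_of_pending {x z : List ℕ} (hxz : x < z) (hz : z.dropLast < x) :
    z.dropLast <+: x := by
  by_contra hnp
  obtain ⟨p, i, j, s, t, hij, hz', rfl⟩ := exists_split hz hnp
  obtain ⟨r, hr⟩ := List.dropLast_prefix z
  rw [← hr, hz'] at hxz
  refine lt_asymm hxz ?_
  simpa using append_cons_lt (p := p) (s := s ++ r) (t := t) hij

/-! ### The index of a vertex -/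

lemma idx_eq (T : PlaneTree) (v : List ℕ) : T.idx v = (T.verts.filter (· < v)).card := by
  unfold idx
  congr 1
  ext w
  simp only [Finset.mem_filter]
  exact Iff.rfl

lemma idx_mono (T : PlaneTree) {a b : List ℕ} (h : a ≤ b) : T.idx a ≤ T.idx b := by
  rw [idx_eq, idx_eq]
  refine Finset.card_le_card fun w hw => ?_
  simp only [Finset.mem_filter] at hw ⊢
  exact ⟨hw.1, hw.2.trans_le h⟩

lemma idx_lt_idx (T : PlaneTree) {a b : List ℕ} (ha : a ∈ T.verts) :
    T.idx a < T.idx b ↔ a < b := by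
  refine ⟨fun h => ?_, fun h => ?_⟩
  · by_contra hab
    exact absurd (T.idx_mono (not_lt.1 hab)) (not_le.2 h)
  · rw [idx_eq, idx_eq]
    refine Finset.card_lt_card ((Finset.ssubset_iff_of_subset fun w hw => ?_).2 ⟨a, ?_, ?_⟩)
    · simp only [Finset.mem_filter] at hw ⊢
      exact ⟨hw.1, hw.2.trans h⟩
    · simp [ha, h]
    · simp

lemma idx_le_idx (T : PlaneTree) {a b : List ℕ} (hb : b ∈ T.verts) :
    T.idx a ≤ T.idx b ↔ a ≤ b := by
  rw [← not_lt, T.idx_lt_idx hb, not_lt]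

lemma exists_idx_eq (T : PlaneTree) {v : List ℕ} (hv : v ∈ T.verts) {r : ℕ}
    (hr : r ≤ T.idx v) : ∃ x ∈ T.verts, T.idx x = r := by
  have hlt : ∀ x ∈ T.verts, T.idx x < T.verts.card := fun x hx => by
    rw [idx_eq]
    exact Finset.card_lt_card (Finset.filter_ssubset.2 ⟨x, hx, lt_irrefl x⟩)
  have hinj : Set.InjOn T.idx T.verts := fun a ha b hb hab =>
    le_antisymm ((T.idx_le_idx hb).1 hab.le) ((T.idx_le_idx ha).1 hab.ge)
  have himg : T.verts.image T.idx = Finset.range T.verts.card := by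
    refine Finset.eq_of_subset_of_card_le (fun n hn => ?_) ?_
    · obtain ⟨x, hx, rfl⟩ := Finset.mem_image.1 hn
      exact Finset.mem_range.2 (hlt x hx)
    · rw [Finset.card_image_of_injOn hinj, Finset.card_range]
  exact Finset.mem_image.1 (himg ▸ Finset.mem_range.2 (hr.trans_lt (hlt v hv)))

/-! ### The Łukasiewicz path counts pending vertices -/

/-- The vertices pending when `x` is visited: those after `x` whose parent is before `x`. The root
is excluded, its `dropLast` being itself. -/
def pending (T : PlaneTree) (x : List ℕ) : Finset (List ℕ) :=
  T.verts.filter fun z => x < z ∧ z.dropLast < x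

lemma mem_pending {T : PlaneTree} {x z : List ℕ} :
    z ∈ T.pending x ↔ z ∈ T.verts ∧ x < z ∧ z.dropLast < x := by
  simp [pending]

lemma sum_deg (T : PlaneTree) (x : List ℕ) :
    ∑ y ∈ T.verts.filter (· < x), T.deg y =
      (T.verts.filter fun z => z ≠ [] ∧ z.dropLast < x).card := by
  rw [Finset.card_eq_sum_card_fiberwise (f := List.dropLast) (t := T.verts.filter (· < x))]
  · refine Finset.sum_congr rfl fun y hy => ?_
    unfold deg
    congr 1
    ext z
    simp only [Finset.mem_filter] at hy ⊢
    constructor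
    · rintro ⟨h1, h2, rfl⟩
      exact ⟨⟨h1, h2, hy.2⟩, rfl⟩
    · rintro ⟨⟨h1, h2, -⟩, rfl⟩
      exact ⟨h1, h2, rfl⟩
  · intro z hz
    simp only [Finset.coe_filter, Set.mem_ofPred_eq] at hz ⊢
    exact ⟨T.prefix_closed z hz.1 _ (List.dropLast_prefix z), hz.2.2⟩

/-- Exploring the vertices before `x` discovers all their children; those not yet explored are `x`
and the pending vertices. Explored vertices other than the root cancel against children, and the
root cancels against `x`. -/
lemma luka_idx_eq_card_pending (T : PlaneTree) {x : List ℕ} (hx : x ∈ T.verts) :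
    T.luka (T.idx x) = (T.pending x).card := by
  have hfil : T.verts.filter (fun v => T.idx v < T.idx x) = T.verts.filter (· < x) :=
    Finset.filter_congr fun v hv => T.idx_lt_idx hv
  unfold luka
  rw [hfil, Finset.sum_sub_distrib, ← Nat.cast_sum, sum_deg]
  simp only [Finset.sum_const, nsmul_eq_mul, mul_one]
  rcases eq_or_ne x [] with rfl | hne
  · simp [pending, List.not_lt_nil]
  · have hpos : [] < x := lt_of_prefix_of_ne List.nil_prefix hne.symm
    have h1 : insert [] (T.verts.filter fun z => z ≠ [] ∧ z.dropLast < x) =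
        insert x (T.verts.filter (· < x) ∪ T.pending x) := by
      ext z
      simp only [Finset.mem_insert, Finset.mem_union, Finset.mem_filter, mem_pending]
      constructor
      · rintro (rfl | ⟨h1, h2, h3⟩)
        · exact Or.inr (Or.inl ⟨T.root_mem, hpos⟩)
        · rcases lt_trichotomy z x with h | h | h
          · exact Or.inr (Or.inl ⟨h1, h⟩)
          · exact Or.inl h
          · exact Or.inr (Or.inr ⟨h1, h, h3⟩)
      · rintro (rfl | ⟨h1, h2⟩ | ⟨h1, h2, h3⟩)
        · exact Or.inr ⟨hx, hne, dropLast_lt hne⟩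
        · rcases eq_or_ne z [] with h | h
          · exact Or.inl h
          · exact Or.inr ⟨h1, h, (dropLast_lt h).trans h2⟩
        · exact Or.inr ⟨h1, fun h => List.not_lt_nil x (h ▸ h2), h3⟩
    have hd : Disjoint (T.verts.filter (· < x)) (T.pending x) :=
      Finset.disjoint_left.2 fun z hz hz' =>
        lt_asymm (Finset.mem_filter.1 hz).2 (mem_pending.1 hz').2.1
    have h2 := congrArg Finset.card h1
    rw [Finset.card_insert_of_notMem (by simp),
      Finset.card_insert_of_notMem (by simp [mem_pending]),
      Finset.card_union_of_disjoint hd] at h2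
    omega

/-! ### Comparison of pending sets -/

lemma luka_le_of_prefix (T : PlaneTree) {u v x : List ℕ} (hu : u ∈ T.verts) (hx : x ∈ T.verts)
    (huv : u <+: v) (hux : u ≤ x) (hxv : x ≤ v) : T.luka (T.idx u) ≤ T.luka (T.idx x) := by
  rw [T.luka_idx_eq_card_pending hu, T.luka_idx_eq_card_pending hx, Nat.cast_le]
  refine Finset.card_le_card fun z hz => ?_
  obtain ⟨h1, h2, h3⟩ := mem_pending.1 hz
  exact mem_pending.2
    ⟨h1, hxv.trans_lt (lt_of_prefix_of_pending huv h2 h3), h3.trans_le hux⟩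

lemma luka_le_of_child_prefix (T : PlaneTree) {u v x : List ℕ} {c : ℕ}
    (hw : u ++ [c] ∈ T.verts) (hx : x ∈ T.verts) (hwv : u ++ [c] <+: v) (hux : u < x)
    (hxv : x ≤ v) : T.luka (T.idx (u ++ [c])) ≤ T.luka (T.idx x) := by
  rw [T.luka_idx_eq_card_pending hw, T.luka_idx_eq_card_pending hx, Nat.cast_le]
  refine Finset.card_le_card fun z hz => ?_
  obtain ⟨h1, h2, h3⟩ := mem_pending.1 hz
  have h4 := prefix_dropLast (dropLast_prefix_of_pending h2 h3) h3.ne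
  rw [List.dropLast_concat] at h4
  exact mem_pending.2 ⟨h1, hxv.trans_lt (lt_of_prefix_of_pending hwv h2 h3),
    (le_of_prefix h4).trans_lt hux⟩

lemma exists_luka_lt (T : PlaneTree) {u v : List ℕ} (hu : u ∈ T.verts) (hv : v ∈ T.verts)
    (huv : u < v) (hnp : ¬ u <+: v) :
    ∃ x ∈ T.verts, u < x ∧ x ≤ v ∧ T.luka (T.idx x) < T.luka (T.idx u) := by
  obtain ⟨p, i, j, s, t, hij, rfl, rfl⟩ := exists_split huv hnp
  have hpre : p ++ [j] <+: p ++ j :: t := ⟨t, by simp⟩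
  have hx := T.prefix_closed _ hv _ hpre
  have hux : p ++ i :: s < p ++ [j] := append_cons_lt hij
  have hpu : p < p ++ i :: s := lt_of_prefix_of_ne (List.prefix_append _ _) (by simp)
  refine ⟨p ++ [j], hx, hux, le_of_prefix hpre, ?_⟩
  rw [T.luka_idx_eq_card_pending hu, T.luka_idx_eq_card_pending hx, Nat.cast_lt]
  refine Finset.card_lt_card
    ((Finset.ssubset_iff_of_subset fun z hz => ?_).2 ⟨p ++ [j], ?_, ?_⟩)
  · obtain ⟨h1, h2, h3⟩ := mem_pending.1 hz
    have h4 := prefix_dropLast (dropLast_prefix_of_pending h2 h3) h3.ne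
    rw [List.dropLast_concat] at h4
    exact mem_pending.2 ⟨h1, hux.trans h2, (le_of_prefix h4).trans_lt hpu⟩
  · exact mem_pending.2 ⟨hx, hux, by rwa [List.dropLast_concat]⟩
  · simp [mem_pending]

end PlaneTree

/-- Let `T` be a plane tree with Łukasiewicz path `W` and let `u_j`, `u_m` (here `u`, `v`)
be vertices with `j = idx u < m = idx v`. Then `u` is a strict ancestor of `v` if and only if
`W j = min{W r : j ≤ r ≤ m}`; moreover, if `u` is a strict ancestor of `v` and `w` is the
child of `u` that is an ancestor of `v`, then `W(w) = min{W r : j + 1 ≤ r ≤ m}`. -/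
theorem strict_ancestor_iff_luka_min (T : PlaneTree) (u v : List ℕ)
    (hu : u ∈ T.verts) (hv : v ∈ T.verts) (hlt : T.idx u < T.idx v) :
    ((u <+: v ∧ u ≠ v) ↔
      T.luka (T.idx u) = sInf {w : ℤ | ∃ r : ℕ, T.idx u ≤ r ∧ r ≤ T.idx v ∧ w = T.luka r})
    ∧ ((u <+: v ∧ u ≠ v) →
      T.lukaV (v.take (u.length + 1)) =
        sInf {w : ℤ | ∃ r : ℕ, T.idx u + 1 ≤ r ∧ r ≤ T.idx v ∧ w = T.luka r}) := by
  have huv : u < v := (T.idx_lt_idx hu).1 hlt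
  refine ⟨⟨fun h => ?_, fun h => ?_⟩, fun h => ?_⟩
  · refine Eq.symm (IsLeast.csInf_eq (And.intro ⟨_, le_rfl, hlt.le, rfl⟩ ?_))
    rintro _ ⟨r, h1, h2, rfl⟩
    obtain ⟨x, hx, rfl⟩ := T.exists_idx_eq hv h2
    exact T.luka_le_of_prefix hu hx h.1 ((T.idx_le_idx hx).1 h1) ((T.idx_le_idx hv).1 h2)
  · refine ⟨?_, huv.ne⟩
    by_contra hnp
    obtain ⟨x, hx, hux, hxv, hW⟩ := T.exists_luka_lt hu hv huv hnp
    refine absurd hW (not_lt.2 (h.trans_le (csInf_le ⟨0, ?_⟩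
      ⟨T.idx x, T.idx_mono hux.le, T.idx_mono hxv, rfl⟩)))
    rintro _ ⟨r, -, h2, rfl⟩
    obtain ⟨y, hy, rfl⟩ := T.exists_idx_eq hv h2
    rw [T.luka_idx_eq_card_pending hy]
    exact Int.natCast_nonneg _
  · obtain ⟨⟨t, rfl⟩, hne⟩ := h
    cases t with
    | nil => simp at hne
    | cons c t =>
      have htake : (u ++ c :: t).take (u.length + 1) = u ++ [c] := by
        simp [List.take_append]
      have hpre : u ++ [c] <+: u ++ c :: t := ⟨t, by simp⟩
      have hw := T.prefix_closed _ hv _ hpre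
      have huw : u < u ++ [c] := PlaneTree.lt_of_prefix_of_ne (List.prefix_append _ _) (by simp)
      rw [htake, PlaneTree.lukaV]
      refine Eq.symm (IsLeast.csInf_eq (And.intro ⟨_, (T.idx_lt_idx hu).2 huw,
        T.idx_mono (PlaneTree.le_of_prefix hpre), rfl⟩ ?_))
      rintro _ ⟨r, h1, h2, rfl⟩
      obtain ⟨x, hx, rfl⟩ := T.exists_idx_eq hv h2
      exact T.luka_le_of_child_prefix hw hx hpre ((T.idx_lt_idx hu).1 h1)
        ((T.idx_le_idx hv).1 h2)
end
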